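/- Let X be a zero-dimensional, locally compact space which is not pseudocompact, with Banaschewski compactification bX, and let υX ⊆ bX be the copy of the N-compactification υ₀X of X inside bX. Suppose X admits a partition of length κ, i.e., a family {U_i : i ∈ I} of pairwise disjoint nonempty clopen subsets of X whose union is X, with |I| = κ an infinite cardinal. Then each of the subspaces bX ∖ υX and bX ∖ X contains a pairwise disjoint family of nonempty open subsets of cardinality κ^ℵ₀; in particular, the cellularity of each of these subspaces is at least κ^ℵ₀. -/

import Mathlib

/-!
Let `c : X → ι` send a point to the index of the piece containing it, and choose a clopen `K ⊆ X`
meeting every fibre of `c` in a nonempty compact set. For `S ⊆ ι` let `W S` be the clopen set of the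
compactification with trace `K ∩ c ⁻¹' S` on `X`. That trace is compact exactly when `S` is finite,
so `W S ⊆ X` exactly when `S` is finite; and if `S` is countable and nonempty, then every point of
`W S` outside `X` lies in the clopen sets `W S \ W {i}`, `i ∈ S`, whose intersection misses `X`, so
it lies outside `υX`. Hence an almost disjoint family of `κ ^ ℵ₀` countably infinite subsets of `ι`
gives `κ ^ ℵ₀` clopen sets whose traces on both remainders are nonempty and pairwise disjoint. The
branches of the tree of finite sequences in `ι`, which `List ι ≃ ι` turns into subsets of `ι`, form
such a family.
-/

open Set TopologicalSpace

universe u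

/-- The copy of the `ℕ`-compactification `υ₀X` inside the Banaschewski compactification:
points all of whose countable families of clopen neighborhoods have intersection meeting `X`. -/
def upsilon {B : Type*} [TopologicalSpace B] (X : Set B) : Set B :=
  {p | ∀ V : ℕ → Set B, (∀ n, IsClopen (V n) ∧ p ∈ V n) → ((⋂ n, V n) ∩ X).Nonempty}

section AlmostDisjoint

variable {α : Type*} {f g : ℕ → α}

/-- The finite sequence `[f 0, …, f (n - 1)]`. As `n` varies, these are the nodes on the branch `f`
of the tree of finite sequences. -/
def initialSegment (f : ℕ → α) (n : ℕ) : List α :=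
  (List.range n).map f

lemma length_initialSegment (f : ℕ → α) (n : ℕ) : (initialSegment f n).length = n := by
  simp [initialSegment]

lemma initialSegment_injective (f : ℕ → α) : Function.Injective (initialSegment f) :=
  Function.LeftInverse.injective (g := List.length) (length_initialSegment f)

lemma initialSegment_eq_initialSegment_iff {m n : ℕ} :
    initialSegment f m = initialSegment g n ↔ m = n ∧ ∀ k < m, f k = g k := by
  constructor
  · intro h
    obtain rfl : m = n := by simpa only [length_initialSegment] using congrArg List.length h
    exact ⟨rfl, fun k hk => List.map_inj_left.1 h k (List.mem_range.2 hk)⟩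
  · rintro ⟨rfl, h⟩
    exact List.map_inj_left.2 fun k hk => h k (List.mem_range.1 hk)

lemma finite_range_initialSegment_inter (hfg : f ≠ g) :
    (range (initialSegment f) ∩ range (initialSegment g)).Finite := by
  obtain ⟨k, hk⟩ := Function.ne_iff.1 hfg
  refine ((finite_Iic k).image (initialSegment f)).subset ?_
  rintro _ ⟨⟨m, rfl⟩, n, hn⟩
  have hagree := (initialSegment_eq_initialSegment_iff.1 hn.symm).2
  exact mem_image_of_mem _ (not_lt.1 fun hkm => hk (hagree k hkm))

lemma exists_injective_pairwise_finite_range_inter (ι : Type*) [Infinite ι] :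
    ∃ s : (ℕ → ι) → ℕ → ι, (∀ f, Function.Injective (s f)) ∧
      Pairwise fun f g => (range (s f) ∩ range (s g)).Finite := by
  obtain ⟨e⟩ := Cardinal.eq.1 (Cardinal.mk_list_eq_mk ι)
  refine ⟨fun f => e ∘ initialSegment f,
    fun f => e.injective.comp (initialSegment_injective f), fun f g hfg => ?_⟩
  simpa only [range_comp, ← image_inter e.injective] using
    (finite_range_initialSegment_inter hfg).image e

end AlmostDisjoint

section LocallyConstant

variable {Y ι : Type*} [TopologicalSpace Y]

lemma exists_isLocallyConstant_preimage_singleton_eq {U : ι → Set Y} (hU : ∀ i, IsOpen (U i))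
    (hdisj : Pairwise (Function.onFun Disjoint U)) (hcover : ⋃ i, U i = univ) :
    ∃ c : Y → ι, IsLocallyConstant c ∧ ∀ i, c ⁻¹' {i} = U i := by
  choose c hc using iUnion_eq_univ_iff.1 hcover
  have hfiber : ∀ i, c ⁻¹' {i} = U i := by
    refine fun i => Subset.antisymm ?_ fun y hy => ?_
    · rintro y rfl
      exact hc y
    · exact hdisj.eq (not_disjoint_iff.2 ⟨y, hc y, hy⟩)
  exact ⟨c, IsLocallyConstant.iff_isOpen_fiber.2 fun i => hfiber i ▸ hU i, hfiber⟩

variable {c : Y → ι} (hc : IsLocallyConstant c)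
include hc

lemma isOpen_setOf_mem_apply {A : ι → Set Y} (hA : ∀ i, IsOpen (A i)) :
    IsOpen {y | y ∈ A (c y)} := by
  refine isOpen_iff_mem_nhds.2 fun y hy => ?_
  filter_upwards [(hA (c y)).mem_nhds hy, hc.eventually_eq y] with z hz hcz
  exact hcz ▸ hz

lemma isClopen_setOf_mem_apply {A : ι → Set Y} (hA : ∀ i, IsClopen (A i)) :
    IsClopen {y | y ∈ A (c y)} :=
  ⟨⟨isOpen_setOf_mem_apply hc fun i => (hA i).compl.isOpen⟩,
    isOpen_setOf_mem_apply hc fun i => (hA i).isOpen⟩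

lemma isCompact_inter_preimage_iff_finite {K : Set Y} (hK : ∀ i, IsCompact (K ∩ c ⁻¹' {i}))
    (hne : ∀ i, (K ∩ c ⁻¹' {i}).Nonempty) {S : Set ι} :
    IsCompact (K ∩ c ⁻¹' S) ↔ S.Finite := by
  constructor
  · intro h
    have himage : c '' K = univ := eq_univ_of_forall fun i => hne i
    let : TopologicalSpace ι := ⊥
    have : DiscreteTopology ι := ⟨rfl⟩
    have hS := h.image hc.continuous
    rwa [image_inter_preimage, himage, univ_inter, isCompact_iff_finite] at hS
  · intro hS
    rw [← biUnion_of_singleton S, preimage_iUnion₂, inter_iUnion₂]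
    exact hS.isCompact_biUnion fun i _ => hK i

end LocallyConstant

section LocallyCompact

variable {Y : Type*} [TopologicalSpace Y] [T2Space Y] [LocallyCompactSpace Y]
  [TotallyDisconnectedSpace Y]

lemma exists_isClopen_isCompact_mem_subset {U : Set Y} (hU : IsOpen U) {y : Y} (hy : y ∈ U) :
    ∃ K, IsClopen K ∧ IsCompact K ∧ y ∈ K ∧ K ⊆ U := by
  obtain ⟨C, hC, hyC, hCU⟩ := exists_compact_subset hU hy
  obtain ⟨K, hK, hyK, hKC⟩ :=
    loc_compact_Haus_tot_disc_of_zero_dim.exists_subset_of_mem_open hyC isOpen_interior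
  have hKC' : K ⊆ C := hKC.trans interior_subset
  exact ⟨K, hK, hC.of_isClosed_subset hK.isClosed hKC', hyK, hKC'.trans hCU⟩

lemma exists_isClopen_isCompact_inter_fiber {ι : Type*} {c : Y → ι} (hc : IsLocallyConstant c)
    (hsurj : Function.Surjective c) :
    ∃ K, IsClopen K ∧ (∀ i, IsCompact (K ∩ c ⁻¹' {i})) ∧ ∀ i, (K ∩ c ⁻¹' {i}).Nonempty := by
  choose y hy using hsurj
  choose A hA hAcompact hyA hAc using
    fun i => exists_isClopen_isCompact_mem_subset (hc {i}) (hy i)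
  have hfiber : ∀ i, {z | z ∈ A (c z)} ∩ c ⁻¹' {i} = A i := by
    refine fun i => Subset.antisymm ?_ fun z hz => ?_
    · rintro z ⟨hz, rfl⟩
      exact hz
    · obtain rfl : c z = i := hAc i hz
      exact ⟨hz, rfl⟩
  refine ⟨{z | z ∈ A (c z)}, isClopen_setOf_mem_apply hc hA, fun i => ?_, fun i => ?_⟩
  · exact hfiber i ▸ hAcompact i
  · exact hfiber i ▸ ⟨y i, hyA i⟩

end LocallyCompact

section DenseSubset

variable {B : Type*} [TopologicalSpace B] {X : Set B}

lemma exists_isClopen_preimage_val_eq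
    (hext : ∀ g : X → Bool, Continuous g → ∃ G : B → Bool, Continuous G ∧ ∀ x : X, G x = g x)
    {A : Set X} (hA : IsClopen A) : ∃ W : Set B, IsClopen W ∧ ((↑) ⁻¹' W : Set X) = A := by
  obtain ⟨G, hG, hGA⟩ := hext A.boolIndicator ((continuous_boolIndicator_iff_isClopen A).2 hA)
  refine ⟨G ⁻¹' {true}, (isClopen_discrete _).preimage hG, ?_⟩
  rw [← preimage_comp, show G ∘ (↑) = A.boolIndicator from funext hGA,
    preimage_boolIndicator_true]

lemma subset_of_preimage_val_subset (hd : Dense X) {V W : Set B} (hV : IsOpen V) (hW : IsClosed W)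
    (h : ((↑) ⁻¹' V : Set X) ⊆ (↑) ⁻¹' W) : V ⊆ W :=
  (hd.open_subset_closure_inter hV).trans <|
    closure_minimal (fun _ hx => h (a := ⟨_, hx.2⟩) hx.1) hW

lemma subset_iff_isCompact_preimage_val [CompactSpace B] [T2Space B] (hd : Dense X) {W : Set B}
    (hW : IsClopen W) : W ⊆ X ↔ IsCompact ((↑) ⁻¹' W : Set X) := by
  constructor
  · intro hWX
    rw [Subtype.isCompact_iff, Subtype.image_preimage_coe, inter_eq_right.2 hWX]
    exact hW.isClosed.isCompact
  · intro hc
    have htrace : IsClosed ((↑) '' ((↑) ⁻¹' W : Set X) : Set B) :=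
      (hc.image continuous_subtype_val).isClosed
    exact (subset_of_preimage_val_subset hd hW.isOpen htrace (subset_preimage_image _ _)).trans
      (Subtype.coe_image_subset _ _)

lemma subset_upsilon : X ⊆ upsilon X :=
  fun p hp _ hV => ⟨p, mem_iInter.2 fun n => (hV n).2, hp⟩

lemma inter_upsilon_subset {W : Set B} (hW : IsClopen W) {V : ℕ → Set B}
    (hV : ∀ n, IsClopen (V n)) (hVX : ∀ n, V n ⊆ X) (hWV : W ∩ X ⊆ ⋃ n, V n) :
    W ∩ upsilon X ⊆ X := by
  rintro p ⟨hpW, hpυ⟩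
  by_contra hpX
  obtain ⟨q, hq, hqX⟩ := hpυ (fun n => W \ V n) fun n =>
    ⟨hW.diff (hV n), hpW, fun hpV => hpX (hVX n hpV)⟩
  rw [mem_iInter] at hq
  obtain ⟨n, hqV⟩ := mem_iUnion.1 (hWV ⟨(hq 0).1, hqX⟩)
  exact (hq n).2 hqV

variable [CompactSpace B] [T2Space B] {ι : Type*} {c : X → ι}

lemma exists_isClopen_subset_iff_finite (hd : Dense X)
    (hext : ∀ g : X → Bool, Continuous g → ∃ G : B → Bool, Continuous G ∧ ∀ x : X, G x = g x)
    (hc : IsLocallyConstant c) {K : Set X} (hK : IsClopen K)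
    (hKcompact : ∀ i, IsCompact (K ∩ c ⁻¹' {i})) (hKne : ∀ i, (K ∩ c ⁻¹' {i}).Nonempty) :
    ∃ W : Set ι → Set B, (∀ S, IsClopen (W S)) ∧ (∀ S, W S ⊆ X ↔ S.Finite) ∧
      (∀ S T, W S ∩ W T ⊆ W (S ∩ T)) ∧ ∀ s : ℕ → ι, W (range s) ∩ upsilon X ⊆ X := by
  choose W hW hWX using fun S : Set ι => exists_isClopen_preimage_val_eq hext
    (hK.inter (⟨⟨hc Sᶜ⟩, hc S⟩ : IsClopen (c ⁻¹' S)))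
  have hfinite : ∀ S, W S ⊆ X ↔ S.Finite := fun S => by
    rw [subset_iff_isCompact_preimage_val hd (hW S), hWX,
      isCompact_inter_preimage_iff_finite hc hKcompact hKne]
  refine ⟨W, hW, hfinite, fun S T => ?_, fun s => ?_⟩
  · refine subset_of_preimage_val_subset hd ((hW S).inter (hW T)).isOpen (hW _).isClosed ?_
    rw [preimage_inter, hWX, hWX, hWX, preimage_inter, ← inter_inter_distrib_left]
  · refine inter_upsilon_subset (hW _) (fun n => hW {s n})
      (fun n => (hfinite _).2 (finite_singleton _)) ?_
    rintro x ⟨hx, hxX⟩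
    lift x to X using hxX
    rw [← mem_preimage, hWX] at hx
    obtain ⟨hxK, n, hn⟩ := hx
    refine mem_iUnion.2 ⟨n, ?_⟩
    rw [← mem_preimage (f := Subtype.val), hWX]
    exact ⟨hxK, hn.symm⟩

lemma exists_pairwise_disjoint_isOpen_compl (hd : Dense X)
    (hext : ∀ g : X → Bool, Continuous g → ∃ G : B → Bool, Continuous G ∧ ∀ x : X, G x = g x)
    [LocallyCompactSpace X] [TotallyDisconnectedSpace X] [Infinite ι]
    (hc : IsLocallyConstant c) (hsurj : Function.Surjective c)
    {Y : Set B} (hXY : X ⊆ Y) (hYυ : Y ⊆ upsilon X) :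
    ∃ V : (ℕ → ι) → Set (Yᶜ : Set B), (∀ f, IsOpen (V f)) ∧ (∀ f, (V f).Nonempty) ∧
      Pairwise (Function.onFun Disjoint V) := by
  obtain ⟨K, hK, hKcompact, hKne⟩ := exists_isClopen_isCompact_inter_fiber hc hsurj
  obtain ⟨W, hW, hWX, hWinter, hWυ⟩ :=
    exists_isClopen_subset_iff_finite hd hext hc hK hKcompact hKne
  obtain ⟨s, hs, hsinter⟩ := exists_injective_pairwise_finite_range_inter ι
  refine ⟨fun f => (↑) ⁻¹' W (range (s f)),
    fun f => (hW _).isOpen.preimage continuous_subtype_val, fun f => ?_, fun f g hfg => ?_⟩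
  · have hWY : ¬ W (range (s f)) ⊆ Y := fun h =>
      infinite_range_of_injective (hs f) <| (hWX _).1 fun p hp => hWυ _ ⟨hp, hYυ (h hp)⟩
    obtain ⟨p, hpW, hpY⟩ := not_subset.1 hWY
    exact ⟨⟨p, hpY⟩, hpW⟩
  · have hinter : W (range (s f)) ∩ W (range (s g)) ⊆ X :=
      (hWinter _ _).trans ((hWX _).2 (hsinter hfg))
    exact disjoint_left.2 fun p hpf hpg => p.2 (hXY (hinter ⟨hpf, hpg⟩))

end DenseSubset

lemma injective_of_nonempty_of_pairwise_disjoint {α β : Type*} {V : α → Set β}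
    (hne : ∀ a, (V a).Nonempty) (hdisj : Pairwise (Function.onFun Disjoint V)) :
    Function.Injective V :=
  Function.injective_iff_pairwise_ne.2 <| hdisj.mono fun a _ h => h.ne (hne a).ne_empty

/-- If `X` is zero-dimensional, locally compact and not pseudocompact, and
`X` admits a partition `{U i : i ∈ ι}` into nonempty clopen pieces with `|ι| = κ` infinite,
then both `B ∖ υX` and `B ∖ X` contain a pairwise disjoint family of nonempty open sets of
cardinality `κ ^ ℵ₀`; in particular their cellularity is at least `κ ^ ℵ₀`. -/
theorem stmt_18 {B : Type u} [TopologicalSpace B] [CompactSpace B] [T2Space B]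
    (hB : IsTopologicalBasis {s : Set B | IsClopen s})
    (X : Set B) (hd : Dense X)
    (hext : ∀ g : X → Bool, Continuous g → ∃ G : B → Bool, Continuous G ∧ ∀ x : X, G x = g x)
    (hlc : LocallyCompactSpace X)
    (hnp : ¬ ∀ f : X → ℝ, Continuous f → ∃ M : ℝ, ∀ x, |f x| ≤ M)
    {ι : Type u} [Infinite ι] (U : ι → Set X)
    (hUclopen : ∀ i, IsClopen (U i)) (hUne : ∀ i, (U i).Nonempty)
    (hUdisj : Pairwise (Function.onFun Disjoint U)) (hUcover : ⋃ i, U i = Set.univ) :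
    (∃ 𝒰 : Set (Set ((upsilon X)ᶜ : Set B)), (∀ V ∈ 𝒰, IsOpen V ∧ V.Nonempty) ∧
        𝒰.PairwiseDisjoint id ∧ Cardinal.mk ι ^ Cardinal.aleph0 ≤ Cardinal.mk 𝒰) ∧
    (∃ 𝒰 : Set (Set (Xᶜ : Set B)), (∀ V ∈ 𝒰, IsOpen V ∧ V.Nonempty) ∧
        𝒰.PairwiseDisjoint id ∧ Cardinal.mk ι ^ Cardinal.aleph0 ≤ Cardinal.mk 𝒰) := by
  have : TotallySeparatedSpace B := totallySeparatedSpace_of_t0_of_basis_clopen hB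
  obtain ⟨c, hc, hcU⟩ := exists_isLocallyConstant_preimage_singleton_eq
    (fun i => (hUclopen i).isOpen) hUdisj hUcover
  have hsurj : Function.Surjective c := fun i => by
    obtain ⟨x, hx⟩ := hUne i
    exact ⟨x, (hcU i).superset hx⟩
  have hcellular : ∀ Y : Set B, X ⊆ Y → Y ⊆ upsilon X →
      ∃ 𝒰 : Set (Set (Yᶜ : Set B)), (∀ V ∈ 𝒰, IsOpen V ∧ V.Nonempty) ∧
        𝒰.PairwiseDisjoint id ∧ Cardinal.mk ι ^ Cardinal.aleph0 ≤ Cardinal.mk 𝒰 := by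
    intro Y hXY hYυ
    obtain ⟨V, hVopen, hVne, hVdisj⟩ :=
      exists_pairwise_disjoint_isOpen_compl hd hext hc hsurj hXY hYυ
    refine ⟨range V, forall_mem_range.2 fun f => ⟨hVopen f, hVne f⟩, hVdisj.range_pairwise, ?_⟩
    simp [Cardinal.mk_range_eq V (injective_of_nonempty_of_pairwise_disjoint hVne hVdisj)]
  exact ⟨hcellular _ subset_upsilon Subset.rfl, hcellular _ Subset.rfl subset_upsilon⟩
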